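/- For every finite abelian p-group A, one has (μ^0(A)/|A|) / (∑_B μ^0(B)/|B|) = μ^1(A), where the sum runs over isomorphism classes of finite abelian p-groups B. (Equivalently: for a random group G chosen according to μ^0 with a uniform random element g ∈ G, conditioned on the event g = 1, the group G is distributed according to μ^1.) -/

import Mathlib

/-!
Cohen–Lenstra moments: for every integer `u ≥ 0` and every finite abelian `p`-group `A`,
the sum over isomorphism classes of finite abelian `p`-groups `B` of `|Sur(B,A)| · μ^u(B)`
equals `|A|^{-u}`.
-/

open scoped Classical

/-- The number of surjective group homomorphisms `B → A`. -/
noncomputable def numSur (B A : Type*) [AddCommGroup B] [AddCommGroup A] : ℕ :=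
  Nat.card {f : B →+ A // Function.Surjective f}

/-- The number of automorphisms of `A`. -/
noncomputable def numAut (A : Type*) [AddCommGroup A] : ℕ :=
  Nat.card (A ≃+ A)

/-- The infinite product `∏_{k=1}^∞ (1 - p^{-(k+u)})`. -/
noncomputable def clProd (p u : ℕ) : ℝ :=
  ∏' k : ℕ, (1 - (p : ℝ) ^ (-((k : ℤ) + 1 + u)))

/-- The Cohen–Lenstra measure `μ^u(A) = |A|^{-u} |Aut(A)|^{-1} ∏_{k=1}^∞ (1 - p^{-(k+u)})`. -/
noncomputable def clMeasure (p u : ℕ) (A : Type*) [AddCommGroup A] : ℝ :=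
  ((Nat.card A : ℝ) ^ u)⁻¹ * ((numAut A : ℝ))⁻¹ * clProd p u

/-- The finite abelian `p`-group `G_λ = ⨁_i ℤ/p^{λ_i}ℤ` associated to a partition `λ`,
a finite multiset of positive integers. -/
def CLGroup (p : ℕ) (lam : Multiset ℕ+) : Type :=
  ∀ i : Fin lam.toList.length, ZMod (p ^ ((lam.toList.get i : ℕ+) : ℕ))

noncomputable instance (p : ℕ) (lam : Multiset ℕ+) : AddCommGroup (CLGroup p lam) := by
  delta CLGroup; infer_instance

/-!
Weight each subgroup of `ℤ ^ n` of `p`-power index by `index ^ (-(n + u))`. Building up the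
subgroups one coordinate at a time by Hermite normal form, the total weight is the product of
`(1 - p ^ (-(k + u + 1)))⁻¹` over `k < n`. Sorting the subgroups by the isomorphism type of the
quotient instead, the total weight is the sum over `B` of
`|Sur(ℤ ^ n, B)| / |B| ^ n * (|B| ^ u * |Aut B|)⁻¹`. As `n → ∞` almost every homomorphism
`ℤ ^ n → B` is surjective, so comparing the limits shows that `μ^u` has total mass one. Since
`μ^u(B) / |B|` is a constant multiple of `μ^(u+1)(B)`, normalizing it gives `μ^(u+1)`.
-/

namespace CohenLenstra

open Filter Topology
open scoped ENNReal

section Index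

theorem index_comap_mul_index_map {A B C : Type*} [AddGroup A] [AddCommGroup B] [AddGroup C]
    {f : A →+ B} {g : B →+ C} (hfg : f.range = g.ker) (hg : Function.Surjective g)
    (H : AddSubgroup B) : (H.comap f).index * (H.map g).index = H.index := by
  rw [AddSubgroup.index_comap, AddSubgroup.index_map, AddMonoidHom.range_eq_top.2 hg,
    AddSubgroup.index_top, mul_one, hfg, ← AddSubgroup.relIndex_sup_right (H := g.ker),
    sup_comm, AddSubgroup.relIndex_mul_index le_sup_left]

theorem index_comap_inl_mul_index_map_snd {M N : Type*} [AddCommGroup M] [AddCommGroup N]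
    (H : AddSubgroup (M × N)) :
    (H.comap (AddMonoidHom.inl M N)).index * (H.map (AddMonoidHom.snd M N)).index = H.index :=
  index_comap_mul_index_map (by ext ⟨x, y⟩; simp [AddSubgroup.mem_prod, eq_comm])
    Prod.snd_surjective H

end Index

section Hermite

variable {M : Type*} [AddCommGroup M]

/-- The subgroup of `M × ℤ` in block Hermite normal form. When `d ≠ 0`, its intersection with `M`
is `L`, its projection to `ℤ` is generated by `d`, and `q` is the class modulo `L` of the
`M`-components of its elements lying over `d`. -/
def hermiteSubgroup (L : AddSubgroup M) (q : M ⧸ L) (d : ℤ) : AddSubgroup (M × ℤ) :=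
  (AddSubgroup.zmultiples (q, d)).comap ((QuotientAddGroup.mk' L).prodMap (AddMonoidHom.id ℤ))

theorem mem_hermiteSubgroup {L : AddSubgroup M} {q : M ⧸ L} {d : ℤ} {x : M × ℤ} :
    x ∈ hermiteSubgroup L q d ↔ ∃ c : ℤ, c • q = x.1 ∧ c * d = x.2 := by
  simp [hermiteSubgroup, AddSubgroup.mem_zmultiples_iff, Prod.ext_iff]

theorem mk_mem_hermiteSubgroup_iff {L : AddSubgroup M} {q : M ⧸ L} {d : ℤ} (hd : d ≠ 0) {x : M} :
    (x, d) ∈ hermiteSubgroup L q d ↔ (x : M ⧸ L) = q := by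
  simp [mem_hermiteSubgroup, mul_eq_right₀ hd, eq_comm]

theorem comap_inl_hermiteSubgroup (L : AddSubgroup M) (q : M ⧸ L) {d : ℤ} (hd : d ≠ 0) :
    (hermiteSubgroup L q d).comap (AddMonoidHom.inl M ℤ) = L := by
  ext x
  simp [mem_hermiteSubgroup, hd, eq_comm (a := (0 : M ⧸ L))]

theorem map_snd_hermiteSubgroup (L : AddSubgroup M) (q : M ⧸ L) (d : ℤ) :
    (hermiteSubgroup L q d).map (AddMonoidHom.snd M ℤ) = AddSubgroup.zmultiples d := by
  ext z
  simp only [AddSubgroup.mem_map, mem_hermiteSubgroup, AddMonoidHom.coe_snd, Prod.exists,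
    exists_eq_right, AddSubgroup.mem_zmultiples_iff, smul_eq_mul]
  constructor
  · rintro ⟨_, c, -, hc⟩
    exact ⟨c, hc⟩
  · rintro ⟨c, hc⟩
    obtain ⟨x, hx⟩ := QuotientAddGroup.mk_surjective (c • q)
    exact ⟨x, c, hx.symm, hc⟩

theorem index_hermiteSubgroup (L : AddSubgroup M) (q : M ⧸ L) {d : ℤ} (hd : d ≠ 0) :
    (hermiteSubgroup L q d).index = L.index * d.natAbs := by
  rw [← index_comap_inl_mul_index_map_snd, comap_inl_hermiteSubgroup L q hd,
    map_snd_hermiteSubgroup, Int.index_zmultiples]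

theorem eq_hermiteSubgroup {H : AddSubgroup (M × ℤ)} {m : M} {d : ℤ} (hm : (m, d) ∈ H)
    (hd : H.map (AddMonoidHom.snd M ℤ) = AddSubgroup.zmultiples d) :
    H = hermiteSubgroup (H.comap (AddMonoidHom.inl M ℤ)) m d := by
  have mem_iff (x : M) (c : ℤ) : (x, c * d) ∈ H ↔ (x - c • m, (0 : ℤ)) ∈ H := by
    have : (x - c • m, (0 : ℤ)) = (x, c * d) - c • (m, d) := by simp
    rw [this, sub_eq_add_neg, H.add_mem_cancel_right (H.neg_mem (H.zsmul_mem hm c))]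
  ext ⟨x, z⟩
  simp only [mem_hermiteSubgroup, ← QuotientAddGroup.mk_zsmul, QuotientAddGroup.eq,
    neg_add_eq_sub, AddSubgroup.mem_comap, AddMonoidHom.inl_apply]
  constructor
  · intro hx
    obtain ⟨c, rfl⟩ : z ∈ AddSubgroup.zmultiples d := hd ▸ AddSubgroup.mem_map_of_mem _ hx
    exact ⟨c, (mem_iff x c).1 hx, rfl⟩
  · rintro ⟨c, hc, rfl⟩
    exact (mem_iff x c).2 hc

/-- The subgroups of `M` whose index is a power of `p`. -/
abbrev PPowIndexSubgroup (p : ℕ) (M : Type*) [AddCommGroup M] :=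
  {L : AddSubgroup M // ∃ j : ℕ, L.index = p ^ j}

variable {p : ℕ}

theorem PPowIndexSubgroup.index_ne_zero (hp : p.Prime) (L : PPowIndexSubgroup p M) :
    L.1.index ≠ 0 := by
  obtain ⟨j, hj⟩ := L.2
  exact hj ▸ pow_ne_zero _ hp.ne_zero

theorem index_hermiteSubgroup_pow (hp : p.Prime) (L : AddSubgroup M) (q : M ⧸ L) (i : ℕ) :
    (hermiteSubgroup L q (p ^ i)).index = L.index * p ^ i := by
  rw [index_hermiteSubgroup _ _ (pow_ne_zero _ (mod_cast hp.ne_zero)), Int.natAbs_pow,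
    Int.natAbs_natCast]

/-- The subgroup of `M × ℤ` in block Hermite normal form with data `L`, `q` and `p ^ i`. -/
def PPowIndexSubgroup.hermite (hp : p.Prime)
    (x : Σ L : PPowIndexSubgroup p M, (M ⧸ L.1) × ℕ) : PPowIndexSubgroup p (M × ℤ) :=
  ⟨hermiteSubgroup x.1.1 x.2.1 (p ^ x.2.2), by
    obtain ⟨j, hj⟩ := x.1.2
    exact ⟨j + x.2.2, by rw [index_hermiteSubgroup_pow hp, hj, pow_add]⟩⟩

theorem PPowIndexSubgroup.hermite_injective (hp : p.Prime) :
    Function.Injective (hermite (M := M) hp) := by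
  have hd (i : ℕ) : (p : ℤ) ^ i ≠ 0 := pow_ne_zero _ (mod_cast hp.ne_zero)
  rintro ⟨⟨L, hL⟩, q, i⟩ ⟨⟨L', hL'⟩, q', i'⟩ h
  have h : hermiteSubgroup L q (p ^ i) = hermiteSubgroup L' q' (p ^ i') := congrArg Subtype.val h
  obtain rfl : L = L' := by
    rw [← comap_inl_hermiteSubgroup L q (hd i), h, comap_inl_hermiteSubgroup L' q' (hd i')]
  obtain rfl : i = i' := by
    have := congrArg (fun H => (H.map (AddMonoidHom.snd M ℤ)).index) h
    simp only [map_snd_hermiteSubgroup, Int.index_zmultiples, Int.natAbs_pow,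
      Int.natAbs_natCast] at this
    exact Nat.pow_right_injective hp.two_le this
  obtain ⟨x, rfl⟩ := QuotientAddGroup.mk_surjective q
  obtain rfl : (x : M ⧸ L) = q' := by
    rw [← mk_mem_hermiteSubgroup_iff (hd i), ← h, mk_mem_hermiteSubgroup_iff (hd i)]
  rfl

theorem PPowIndexSubgroup.hermite_surjective (hp : p.Prime) :
    Function.Surjective (hermite (M := M) hp) := by
  rintro ⟨H, j, hj⟩
  rw [← index_comap_inl_mul_index_map_snd] at hj
  obtain ⟨k, -, hk⟩ := (Nat.dvd_prime_pow hp).1 (Dvd.intro _ hj)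
  obtain ⟨i, -, hi⟩ := (Nat.dvd_prime_pow hp).1 (Dvd.intro_left _ hj)
  have hsnd : H.map (AddMonoidHom.snd M ℤ) = AddSubgroup.zmultiples ((p : ℤ) ^ i) := by
    obtain ⟨d, hd⟩ := Int.subgroup_cyclic (H.map (AddMonoidHom.snd M ℤ))
    rw [← AddSubgroup.zmultiples_eq_closure] at hd
    rw [hd, Int.index_zmultiples] at hi
    rw [hd, ← Int.zmultiples_natAbs, hi, Nat.cast_pow]
  obtain ⟨⟨m, _⟩, hm, rfl⟩ : (p : ℤ) ^ i ∈ H.map (AddMonoidHom.snd M ℤ) :=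
    hsnd ▸ AddSubgroup.mem_zmultiples _
  exact ⟨⟨⟨_, k, hk⟩, m, i⟩, Subtype.ext (eq_hermiteSubgroup hm hsnd).symm⟩

end Hermite

section Zeta

variable {p : ℕ} {M N : Type*} [AddCommGroup M] [AddCommGroup N]

/-- The local factor at `p` of the subgroup zeta function `s ↦ ∑_L [M : L]^{-s}` of `M`. It takes
values in `ℝ≥0∞`, so that no convergence has to be checked. -/
noncomputable def subgroupZeta (p : ℕ) (M : Type*) [AddCommGroup M] (s : ℕ) : ℝ≥0∞ :=
  ∑' L : PPowIndexSubgroup p M, (L.1.index : ℝ≥0∞)⁻¹ ^ s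

theorem subgroupZeta_congr (e : M ≃+ N) (s : ℕ) : subgroupZeta p M s = subgroupZeta p N s := by
  let E : PPowIndexSubgroup p M ≃ PPowIndexSubgroup p N :=
    e.mapAddSubgroup.toEquiv.subtypeEquiv fun L => by simp
  rw [subgroupZeta, subgroupZeta, ← E.tsum_eq]
  exact tsum_congr fun L => by simp [E]

theorem subgroupZeta_of_subsingleton [Subsingleton M] (s : ℕ) : subgroupZeta p M s = 1 := by
  have index_eq_one (L : PPowIndexSubgroup p M) : L.1.index = 1 := by
    rw [Subsingleton.elim L.1 ⊤, AddSubgroup.index_top]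
  let _ : Unique (PPowIndexSubgroup p M) :=
    { default := ⟨⊤, 0, by simp⟩, uniq := fun L => Subtype.ext (Subsingleton.elim _ _) }
  simp only [subgroupZeta, index_eq_one, Nat.cast_one, inv_one, one_pow, tsum_fintype,
    Fintype.sum_unique]

theorem subgroupZeta_prod_int (hp : p.Prime) (s : ℕ) :
    subgroupZeta p (M × ℤ) (s + 1) =
      subgroupZeta p M s * (1 - (p : ℝ≥0∞)⁻¹ ^ (s + 1))⁻¹ := by
  let E := Equiv.ofBijective (PPowIndexSubgroup.hermite (M := M) hp)
    ⟨PPowIndexSubgroup.hermite_injective hp, PPowIndexSubgroup.hermite_surjective hp⟩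
  have term_eq (L : PPowIndexSubgroup p M) (q : M ⧸ L.1) (i : ℕ) :
      ((E ⟨L, q, i⟩).1.index : ℝ≥0∞)⁻¹ ^ (s + 1) =
        (L.1.index : ℝ≥0∞)⁻¹ ^ (s + 1) * ((p : ℝ≥0∞)⁻¹ ^ (s + 1)) ^ i := by
    have : (E ⟨L, q, i⟩).1.index = L.1.index * p ^ i := index_hermiteSubgroup_pow hp L.1 q i
    rw [this, Nat.cast_mul, Nat.cast_pow,
      ENNReal.mul_inv (Or.inr (by finiteness)) (Or.inl (by finiteness)), mul_pow, ENNReal.inv_pow,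
      pow_right_comm]
  rw [subgroupZeta, ← E.tsum_eq, ENNReal.tsum_sigma', subgroupZeta, ← ENNReal.tsum_mul_right]
  refine tsum_congr fun L => ?_
  have index_ne_zero := L.index_ne_zero hp
  have : L.1.FiniteIndex := ⟨index_ne_zero⟩
  have card_quotient : (ENat.card (M ⧸ L.1) : ℝ≥0∞) = L.1.index := by
    simp [ENat.card_eq_coe_natCard, AddSubgroup.index]
  simp only [term_eq]
  rw [ENNReal.tsum_prod']
  simp only [ENNReal.tsum_mul_left, ENNReal.tsum_geometric, ENNReal.tsum_const]
  rw [card_quotient, pow_succ (L.1.index : ℝ≥0∞)⁻¹, mul_assoc,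
    ENNReal.inv_mul_cancel_left (mod_cast index_ne_zero) (by finiteness)]

theorem subgroupZeta_int_pow (hp : p.Prime) (n u : ℕ) :
    subgroupZeta p (Fin n → ℤ) (n + u) =
      ∏ k ∈ Finset.range n, (1 - (p : ℝ≥0∞)⁻¹ ^ (k + u + 1))⁻¹ := by
  induction n with
  | zero => rw [subgroupZeta_of_subsingleton, Finset.prod_range_zero]
  | succ n ih =>
    let e : (Fin (n + 1) → ℤ) ≃+ (Fin n → ℤ) × ℤ :=
      ((Fin.consLinearEquiv ℤ fun _ => ℤ).symm.toAddEquiv).trans AddEquiv.prodComm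
    rw [subgroupZeta_congr e, Nat.add_right_comm, subgroupZeta_prod_int hp, ih,
      Finset.prod_range_succ]

end Zeta

section Classification

variable {p : ℕ}

theorem exists_equiv_comp_eq {α β γ : Type*} [Fintype α] [Fintype β] {f : α → γ} {g : β → γ}
    (h : Finset.univ.val.map f = Finset.univ.val.map g) : ∃ σ : α ≃ β, g ∘ σ = f := by
  have fiber_equiv (c : γ) : Nonempty ({a // f a = c} ≃ {b // g b = c}) := by
    have := congrArg (Multiset.count c) h
    rw [Multiset.count_map, Multiset.count_map] at this
    rw [← Fintype.card_eq, Fintype.card_subtype, Fintype.card_subtype]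
    simpa only [Finset.card_def, Finset.filter_val, eq_comm (a := c)] using this
  let e (c : γ) := (fiber_equiv c).some
  refine ⟨(Equiv.sigmaFiberEquiv f).symm.trans
    ((Equiv.sigmaCongrRight e).trans (Equiv.sigmaFiberEquiv g)), funext fun a => ?_⟩
  exact (e (f a) ⟨a, rfl⟩).2

theorem nonempty_pi_zmod_addEquiv_CLGroup {ι : Type*} [Fintype ι] (k : ι → ℕ+) :
    Nonempty ((∀ i, ZMod (p ^ (k i : ℕ))) ≃+ CLGroup p (Finset.univ.val.map k)) := by
  generalize hlam : Finset.univ.val.map k = lam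
  have map_get : Finset.univ.val.map lam.toList.get = lam := by
    rw [Fin.univ_val_map, List.ofFn_get, Multiset.coe_toList]
  obtain ⟨σ, rfl⟩ := exists_equiv_comp_eq (hlam.trans map_get.symm)
  exact ⟨(RingEquiv.piCongrLeft (fun i => ZMod (p ^ (lam.toList.get i : ℕ))) σ).toAddEquiv⟩

theorem exists_addEquiv_CLGroup (hp : p.Prime) {G : Type*} [AddCommGroup G] {n : ℕ}
    (hG : Nat.card G = p ^ n) : ∃ lam : Multiset ℕ+, Nonempty (G ≃+ CLGroup p lam) := by
  have : Finite G := Nat.finite_of_card_ne_zero (hG ▸ pow_ne_zero _ hp.ne_zero)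
  obtain ⟨ι, _, d, hd, ⟨e⟩⟩ := AddCommGroup.equiv_directSum_zmod_of_finite' G
  let e : G ≃+ (∀ i, ZMod (d i)) := e.trans (DirectSum.addEquivProd _)
  have prod_d : ∏ i, d i = p ^ n := by
    simp [← hG, Nat.card_congr e.toEquiv, Nat.card_pi]
  have d_eq_pow (i : ι) : ∃ k : ℕ+, d i = p ^ (k : ℕ) := by
    obtain ⟨k, -, hk⟩ := (Nat.dvd_prime_pow hp).1
      (prod_d ▸ Finset.dvd_prod_of_mem d (Finset.mem_univ i))
    have hk0 : k ≠ 0 := fun h => (hd i).ne' (by rw [hk, h, pow_zero])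
    exact ⟨⟨k, Nat.pos_of_ne_zero hk0⟩, hk⟩
  choose k hk using d_eq_pow
  obtain rfl : d = fun i => p ^ (k i : ℕ) := funext hk
  obtain ⟨e'⟩ := nonempty_pi_zmod_addEquiv_CLGroup (p := p) k
  exact ⟨_, ⟨e.trans e'⟩⟩

theorem card_pow_torsion_zmod (hp : p.Prime) (e k : ℕ) :
    Nat.card {x : ZMod (p ^ e) // p ^ k • x = 0} = p ^ min k e := by
  have : NeZero (p ^ e) := ⟨pow_ne_zero _ hp.ne_zero⟩
  calc Nat.card {x : ZMod (p ^ e) // p ^ k • x = 0}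
      = (p ^ e).gcd (p ^ k) := by
        simpa using! IsAddCyclic.card_nsmulAddMonoidHom_ker (ZMod (p ^ e)) (p ^ k)
    _ = p ^ min k e := by
        rcases le_total k e with h | h
        · rw [min_eq_left h, Nat.gcd_eq_right (pow_dvd_pow p h)]
        · rw [min_eq_right h, Nat.gcd_eq_left (pow_dvd_pow p h)]

theorem card_pow_torsion_pi_zmod (hp : p.Prime) {ι : Type*} [Fintype ι] (e : ι → ℕ) (k : ℕ) :
    Nat.card {x : ∀ i, ZMod (p ^ e i) // p ^ k • x = 0} = p ^ ∑ i, min k (e i) := by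
  let E : {x : ∀ i, ZMod (p ^ e i) // p ^ k • x = 0} ≃
      ∀ i, {x : ZMod (p ^ e i) // p ^ k • x = 0} :=
    (Equiv.subtypeEquivRight fun _ => funext_iff).trans
      (Equiv.subtypePiEquivPi (p := fun i (x : ZMod (p ^ e i)) => p ^ k • x = 0))
  rw [Nat.card_congr E, Nat.card_pi]
  simp only [card_pow_torsion_zmod hp, Finset.prod_pow_eq_pow_sum]

theorem sum_univ_toList_get {α β : Type*} [AddCommMonoid β] (s : Multiset α) (f : α → β) :
    ∑ i, f (s.toList.get i) = (s.map f).sum := by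
  simp only [List.get_eq_getElem, Fin.sum_univ_fun_getElem, Multiset.sum_map_toList]

theorem card_CLGroup (p : ℕ) (lam : Multiset ℕ+) :
    Nat.card (CLGroup p lam) = p ^ (lam.map fun e : ℕ+ => (e : ℕ)).sum := by
  rw [CLGroup, Nat.card_pi, ← sum_univ_toList_get]
  simp only [Nat.card_zmod, Finset.prod_pow_eq_pow_sum]

theorem finite_CLGroup (hp : p.Prime) (lam : Multiset ℕ+) : Finite (CLGroup p lam) :=
  Nat.finite_of_card_ne_zero (card_CLGroup p lam ▸ pow_ne_zero _ hp.ne_zero)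

theorem card_pow_torsion_CLGroup (hp : p.Prime) (lam : Multiset ℕ+) (k : ℕ) :
    Nat.card {x : CLGroup p lam // p ^ k • x = 0} =
      p ^ (lam.map fun e : ℕ+ => min k (e : ℕ)).sum := by
  rw [← sum_univ_toList_get]
  exact card_pow_torsion_pi_zmod hp _ k

-- `k ↦ min k e` is concave, with its second difference concentrated at `k + 1 = e`.
theorem sum_min_add_count_add_sum_min (lam : Multiset ℕ+) (k : ℕ) :
    (lam.map fun e : ℕ+ => min k (e : ℕ)).sum + lam.count k.succPNat +
        (lam.map fun e : ℕ+ => min (k + 2) (e : ℕ)).sum =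
      2 * (lam.map fun e : ℕ+ => min (k + 1) (e : ℕ)).sum := by
  induction lam using Multiset.induction with
  | empty => simp
  | cons a s ih =>
    have second_difference : min k (a : ℕ) + (if k.succPNat = a then 1 else 0) + min (k + 2) (a : ℕ)
        = 2 * min (k + 1) (a : ℕ) := by
      have : k.succPNat = a ↔ k + 1 = (a : ℕ) := PNat.coe_inj.symm
      simp only [this]
      split_ifs <;> omega
    simp only [Multiset.map_cons, Multiset.sum_cons, Multiset.count_cons]
    omega

theorem eq_of_CLGroup_addEquiv (hp : p.Prime) {lam mu : Multiset ℕ+}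
    (e : CLGroup p lam ≃+ CLGroup p mu) : lam = mu := by
  have sum_min_eq (k : ℕ) : (lam.map fun e : ℕ+ => min k (e : ℕ)).sum =
      (mu.map fun e : ℕ+ => min k (e : ℕ)).sum := by
    apply Nat.pow_right_injective hp.two_le
    dsimp only
    rw [← card_pow_torsion_CLGroup hp, ← card_pow_torsion_CLGroup hp]
    exact Nat.card_congr (e.toEquiv.subtypeEquiv fun x => by simp [← map_nsmul])
  ext c
  obtain ⟨k, rfl⟩ : ∃ k : ℕ, c = k.succPNat := ⟨c.natPred, c.succPNat_natPred.symm⟩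
  have hlam := sum_min_add_count_add_sum_min lam k
  have hmu := sum_min_add_count_add_sum_min mu k
  rw [sum_min_eq, sum_min_eq, sum_min_eq] at hlam
  omega

end Classification

section Surjections

variable {M G : Type*} [AddCommGroup M] [AddCommGroup G]

/-- Homomorphisms out of `ℤ ^ n` correspond to the images of the standard basis. -/
noncomputable def intPowHomEquiv (n : ℕ) (G : Type*) [AddCommGroup G] :
    ((Fin n → ℤ) →+ G) ≃ (Fin n → G) :=
  (addMonoidHomLequivInt ℤ).toEquiv.trans ((Pi.basisFun ℤ (Fin n)).constr ℤ).symm.toEquiv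

theorem card_int_pow_hom (n : ℕ) (G : Type*) [AddCommGroup G] :
    Nat.card ((Fin n → ℤ) →+ G) = Nat.card G ^ n := by
  rw [Nat.card_congr (intPowHomEquiv n G), Nat.card_fun, Nat.card_fin]

theorem finite_int_pow_hom (n : ℕ) (G : Type*) [AddCommGroup G] [Finite G] :
    Finite ((Fin n → ℤ) →+ G) :=
  Finite.of_equiv _ (intPowHomEquiv n G).symm

theorem numSur_int_pow_le (n : ℕ) (G : Type*) [AddCommGroup G] [Finite G] :
    numSur (Fin n → ℤ) G ≤ Nat.card G ^ n := by
  have := finite_int_pow_hom n G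
  rw [← card_int_pow_hom]
  exact Finite.card_subtype_le _

theorem card_hom_le_numSur_add_sum [Finite (M →+ G)] [Fintype {H : AddSubgroup G // H ≠ ⊤}] :
    Nat.card (M →+ G) ≤ numSur M G + ∑ H : {H : AddSubgroup G // H ≠ ⊤}, Nat.card (M →+ H.1) := by
  have (H : AddSubgroup G) : Finite (M →+ H) :=
    Finite.of_injective H.subtype.comp fun _ _ => (AddMonoidHom.cancel_left H.subtype_injective).1
  let F : {f : M →+ G // Function.Surjective f} ⊕ (Σ H : {H : AddSubgroup G // H ≠ ⊤}, M →+ H.1) →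
      (M →+ G) := Sum.elim Subtype.val fun x => x.1.1.subtype.comp x.2
  have F_surjective : Function.Surjective F := by
    intro f
    by_cases hf : f.range = ⊤
    · exact ⟨Sum.inl ⟨f, AddMonoidHom.range_eq_top.1 hf⟩, rfl⟩
    · exact ⟨Sum.inr ⟨⟨f.range, hf⟩, f.rangeRestrict⟩, rfl⟩
  simpa only [numSur, Nat.card_sum, Nat.card_sigma] using
    Nat.card_le_card_of_surjective F F_surjective

theorem tendsto_numSur_int_pow_div (G : Type*) [AddCommGroup G] [Finite G] :
    Tendsto (fun n => (numSur (Fin n → ℤ) G : ℝ) / (Nat.card G : ℝ) ^ n) atTop (𝓝 1) := by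
  have : Fintype {H : AddSubgroup G // H ≠ ⊤} := Fintype.ofFinite _
  have card_pos : (0 : ℝ) < Nat.card G := mod_cast Nat.card_pos
  have lower (n : ℕ) :
      1 - ∑ H : {H : AddSubgroup G // H ≠ ⊤}, ((Nat.card H.1 : ℝ) / Nat.card G) ^ n ≤
        (numSur (Fin n → ℤ) G : ℝ) / (Nat.card G : ℝ) ^ n := by
    have := finite_int_pow_hom n G
    have card_le := card_hom_le_numSur_add_sum (M := Fin n → ℤ) (G := G)
    simp only [card_int_pow_hom] at card_le
    simp only [div_pow, ← Finset.sum_div]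
    rw [sub_le_iff_le_add, ← add_div, one_le_div (by positivity)]
    exact_mod_cast card_le
  have upper (n : ℕ) : (numSur (Fin n → ℤ) G : ℝ) / (Nat.card G : ℝ) ^ n ≤ 1 :=
    div_le_one_of_le₀ (mod_cast numSur_int_pow_le n G) (by positivity)
  have proper_ratio_tendsto (H : {H : AddSubgroup G // H ≠ ⊤}) :
      Tendsto (fun n => ((Nat.card H.1 : ℝ) / Nat.card G) ^ n) atTop (𝓝 0) := by
    refine tendsto_pow_atTop_nhds_zero_of_lt_one (by positivity) ((div_lt_one card_pos).2 ?_)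
    exact_mod_cast (AddSubgroup.card_le_card_addGroup H.1).lt_of_ne
      (mt (AddSubgroup.card_eq_iff_eq_top H.1).1 H.2)
  have lower_tendsto := (tendsto_finsetSum Finset.univ
    fun H _ => proper_ratio_tendsto H).const_sub 1
  rw [Finset.sum_const_zero, sub_zero] at lower_tendsto
  exact tendsto_of_tendsto_of_tendsto_of_le_of_le lower_tendsto tendsto_const_nhds lower upper

theorem numAut_ne_zero (G : Type*) [AddCommGroup G] [Finite G] : numAut G ≠ 0 := by
  have : Finite (G ≃+ G) := Finite.of_injective _ (DFunLike.coe_injective (F := G ≃+ G))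
  have : Nonempty (G ≃+ G) := ⟨AddEquiv.refl G⟩
  exact Nat.card_pos.ne'

/-- The subgroups `L` of `M` with `M ⧸ L ≃+ G`, i.e. the orbits of `Aut G` on surjections
`M → G`. -/
abbrev SubgroupWithQuotient (M G : Type*) [AddCommGroup M] [AddCommGroup G] :=
  {L : AddSubgroup M // Nonempty (M ⧸ L ≃+ G)}

/-- The surjection `M → G` with kernel `L` which is the automorphism `a` times a chosen one. -/
noncomputable def SubgroupWithQuotient.toSurjection (x : SubgroupWithQuotient M G × (G ≃+ G)) :
    {f : M →+ G // Function.Surjective f} :=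
  let e := x.1.2.some.trans x.2
  ⟨(e : M ⧸ x.1.1 →+ G).comp (QuotientAddGroup.mk' x.1.1),
    e.surjective.comp (QuotientAddGroup.mk'_surjective _)⟩

theorem SubgroupWithQuotient.ker_toSurjection (x : SubgroupWithQuotient M G × (G ≃+ G)) :
    (toSurjection x).1.ker = x.1.1 := by
  ext y
  simp [toSurjection, AddMonoidHom.mem_ker]

theorem SubgroupWithQuotient.toSurjection_bijective :
    Function.Bijective (toSurjection (M := M) (G := G)) := by
  constructor
  · rintro ⟨L, a⟩ ⟨L', a'⟩ h
    obtain rfl : L = L' := Subtype.ext <| by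
      rw [← ker_toSurjection (L, a), h, ker_toSurjection]
    congr 1
    ext y
    obtain ⟨q, rfl⟩ := L.2.some.surjective y
    obtain ⟨x, rfl⟩ := QuotientAddGroup.mk_surjective q
    exact DFunLike.congr_fun (congrArg Subtype.val h) x
  · rintro ⟨f, hf⟩
    let e := QuotientAddGroup.quotientKerEquivOfSurjective f hf
    let L : SubgroupWithQuotient M G := ⟨f.ker, ⟨e⟩⟩
    refine ⟨(L, L.2.some.symm.trans e), Subtype.ext (AddMonoidHom.ext fun x => ?_)⟩
    have : e x = f x := rfl
    simpa [toSurjection, L] using this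

theorem card_subgroupWithQuotient_mul_numAut (M G : Type*) [AddCommGroup M] [AddCommGroup G] :
    Nat.card (SubgroupWithQuotient M G) * numAut G = numSur M G := by
  rw [numAut, ← Nat.card_prod, numSur,
    Nat.card_congr (Equiv.ofBijective _ SubgroupWithQuotient.toSurjection_bijective)]

theorem finite_subgroupWithQuotient [Finite (M →+ G)] : Finite (SubgroupWithQuotient M G) := by
  have : Finite (SubgroupWithQuotient M G × (G ≃+ G)) :=
    Finite.of_injective _ SubgroupWithQuotient.toSurjection_bijective.1
  have : Nonempty (G ≃+ G) := ⟨AddEquiv.refl G⟩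
  exact Finite.prod_left (G ≃+ G)

variable {p : ℕ}

/-- A subgroup with quotient `CLGroup p lam`, regarded as a subgroup of `p`-power index. -/
def SubgroupWithQuotient.toPPowIndex
    (x : Σ lam : Multiset ℕ+, SubgroupWithQuotient M (CLGroup p lam)) : PPowIndexSubgroup p M :=
  ⟨x.2.1, _, (Nat.card_congr x.2.2.some.toEquiv).trans (card_CLGroup p x.1)⟩

theorem SubgroupWithQuotient.toPPowIndex_bijective (hp : p.Prime) :
    Function.Bijective (toPPowIndex (M := M) (p := p)) := by
  constructor
  · rintro ⟨lam, L, ⟨e⟩⟩ ⟨lam', L', ⟨e'⟩⟩ h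
    obtain rfl : L = L' := congrArg Subtype.val h
    obtain rfl := eq_of_CLGroup_addEquiv hp (e.symm.trans e')
    rfl
  · rintro ⟨L, j, hj⟩
    obtain ⟨lam, e⟩ := exists_addEquiv_CLGroup hp hj
    exact ⟨⟨lam, L, e⟩, rfl⟩

theorem subgroupZeta_eq_tsum_numSur (hp : p.Prime) [∀ lam, Finite (M →+ CLGroup p lam)] (s : ℕ) :
    subgroupZeta p M s = ∑' lam : Multiset ℕ+, (numSur M (CLGroup p lam) : ℝ≥0∞) *
      ((Nat.card (CLGroup p lam) : ℝ≥0∞)⁻¹ ^ s * (numAut (CLGroup p lam) : ℝ≥0∞)⁻¹) := by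
  let E := Equiv.ofBijective _ (SubgroupWithQuotient.toPPowIndex_bijective (M := M) hp)
  have index_eq (lam : Multiset ℕ+) (L : SubgroupWithQuotient M (CLGroup p lam)) :
      (E ⟨lam, L⟩).1.index = Nat.card (CLGroup p lam) := Nat.card_congr L.2.some.toEquiv
  rw [subgroupZeta, ← E.tsum_eq, ENNReal.tsum_sigma']
  refine tsum_congr fun lam => ?_
  have := finite_CLGroup hp lam
  have := finite_subgroupWithQuotient (M := M) (G := CLGroup p lam)
  have aut_ne_zero : (numAut (CLGroup p lam) : ℝ≥0∞) ≠ 0 := mod_cast numAut_ne_zero _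
  simp only [index_eq]
  rw [ENNReal.tsum_const, ENat.card_eq_coe_natCard, ENat.toENNReal_coe,
    ← card_subgroupWithQuotient_mul_numAut, Nat.cast_mul, mul_comm (_ ^ s), mul_assoc,
    ENNReal.mul_inv_cancel_left aut_ne_zero (by finiteness)]

end Surjections

section Limit

theorem tsum_eq_of_le_of_tendsto {ι κ : Type*} {l : Filter κ} [l.NeBot] {f : κ → ι → ℝ≥0∞}
    {g : ι → ℝ≥0∞} {S : ℝ≥0∞} (hle : ∀ k i, f k i ≤ g i)
    (hfg : ∀ i, Tendsto (fun k => f k i) l (𝓝 (g i)))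
    (hS : Tendsto (fun k => ∑' i, f k i) l (𝓝 S)) : ∑' i, g i = S := by
  refine le_antisymm ?_ (le_of_tendsto' hS fun k => ENNReal.tsum_le_tsum (hle k))
  rw [ENNReal.tsum_eq_iSup_sum]
  exact iSup_le fun s => le_of_tendsto_of_tendsto' (tendsto_finsetSum s fun i _ => hfg i) hS
    fun k => ENNReal.sum_le_tsum s

variable {p : ℕ}

theorem one_sub_inv_pow_pos (hp : 1 < p) {k : ℕ} (hk : k ≠ 0) : 0 < 1 - (p : ℝ)⁻¹ ^ k :=
  sub_pos.2 <| pow_lt_one₀ (by positivity) (inv_lt_one_of_one_lt₀ (mod_cast hp)) hk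

theorem summable_norm_neg_inv_pow (hp : 1 < p) (u : ℕ) :
    Summable fun k : ℕ => ‖-(p : ℝ)⁻¹ ^ (k + u + 1)‖ := by
  have := summable_geometric_of_lt_one (r := (p : ℝ)⁻¹) (by positivity)
    (inv_lt_one_of_one_lt₀ (mod_cast hp))
  simpa [add_assoc] using (summable_nat_add_iff (u + 1)).2 this

theorem clProd_eq_tprod_inv_pow (p u : ℕ) :
    clProd p u = ∏' k : ℕ, (1 + -(p : ℝ)⁻¹ ^ (k + u + 1)) := by
  refine tprod_congr fun k => ?_
  rw [← sub_eq_add_neg, inv_pow, ← zpow_natCast, ← zpow_neg]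
  push_cast
  rw [add_right_comm]

theorem tendsto_prod_one_sub_inv_pow (hp : 1 < p) (u : ℕ) :
    Tendsto (fun n => ∏ k ∈ Finset.range n, (1 - (p : ℝ)⁻¹ ^ (k + u + 1))) atTop
      (𝓝 (clProd p u)) := by
  rw [clProd_eq_tprod_inv_pow]
  simpa only [← sub_eq_add_neg] using
    (multipliable_one_add_of_summable (summable_norm_neg_inv_pow hp u)).hasProd.tendsto_prod_nat

theorem clProd_pos (hp : 1 < p) (u : ℕ) : 0 < clProd p u := by
  have nonneg : 0 ≤ clProd p u := ge_of_tendsto' (tendsto_prod_one_sub_inv_pow hp u) fun n =>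
    Finset.prod_nonneg fun k _ => (one_sub_inv_pow_pos hp (k + u).succ_ne_zero).le
  refine nonneg.lt_of_ne' ?_
  rw [clProd_eq_tprod_inv_pow]
  refine tprod_one_add_ne_zero_of_summable (fun k => ?_) (summable_norm_neg_inv_pow hp u)
  rw [← sub_eq_add_neg]
  exact (one_sub_inv_pow_pos hp (k + u).succ_ne_zero).ne'

theorem tendsto_subgroupZeta_int_pow (hp : p.Prime) (u : ℕ) :
    Tendsto (fun n => subgroupZeta p (Fin n → ℤ) (n + u)) atTop
      (𝓝 (ENNReal.ofReal (clProd p u)⁻¹)) := by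
  have zeta_eq (n : ℕ) : subgroupZeta p (Fin n → ℤ) (n + u) =
      ENNReal.ofReal (∏ k ∈ Finset.range n, (1 - (p : ℝ)⁻¹ ^ (k + u + 1)))⁻¹ := by
    have factor_pos (k : ℕ) := one_sub_inv_pow_pos hp.one_lt (k + u).succ_ne_zero
    rw [subgroupZeta_int_pow hp, ← Finset.prod_inv_distrib,
      ENNReal.ofReal_prod_of_nonneg fun k _ => (inv_pos.2 (factor_pos k)).le]
    refine Finset.prod_congr rfl fun k _ => ?_
    rw [ENNReal.ofReal_inv_of_pos (factor_pos k), ENNReal.ofReal_sub _ (by positivity),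
      ENNReal.ofReal_pow (by positivity), ENNReal.ofReal_inv_of_pos (mod_cast hp.pos),
      ENNReal.ofReal_one, ENNReal.ofReal_natCast]
  simp only [zeta_eq]
  exact ENNReal.tendsto_ofReal
    ((tendsto_prod_one_sub_inv_pow hp.one_lt u).inv₀ (clProd_pos hp.one_lt u).ne')

theorem tsum_inv_card_pow_mul_inv_numAut (hp : p.Prime) (u : ℕ) :
    ∑' lam : Multiset ℕ+, (Nat.card (CLGroup p lam) : ℝ≥0∞)⁻¹ ^ u *
      (numAut (CLGroup p lam) : ℝ≥0∞)⁻¹ = ENNReal.ofReal (clProd p u)⁻¹ := by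
  have (lam : Multiset ℕ+) := finite_CLGroup hp lam
  have (n : ℕ) (lam : Multiset ℕ+) := finite_int_pow_hom n (CLGroup p lam)
  let ratio (n : ℕ) (lam : Multiset ℕ+) : ℝ :=
    numSur (Fin n → ℤ) (CLGroup p lam) / (Nat.card (CLGroup p lam) : ℝ) ^ n
  let weight (lam : Multiset ℕ+) : ℝ≥0∞ :=
    (Nat.card (CLGroup p lam) : ℝ≥0∞)⁻¹ ^ u * (numAut (CLGroup p lam) : ℝ≥0∞)⁻¹
  have ofReal_ratio (n : ℕ) (lam : Multiset ℕ+) : ENNReal.ofReal (ratio n lam) =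
      numSur (Fin n → ℤ) (CLGroup p lam) * (Nat.card (CLGroup p lam) : ℝ≥0∞)⁻¹ ^ n := by
    have card_pos : (0 : ℝ) < Nat.card (CLGroup p lam) := mod_cast Nat.card_pos
    rw [ENNReal.ofReal_div_of_pos (by positivity), ENNReal.ofReal_pow card_pos.le,
      ENNReal.ofReal_natCast, ENNReal.ofReal_natCast, div_eq_mul_inv, ENNReal.inv_pow]
  have zeta_eq (n : ℕ) : subgroupZeta p (Fin n → ℤ) (n + u) =
      ∑' lam, ENNReal.ofReal (ratio n lam) * weight lam := by
    rw [subgroupZeta_eq_tsum_numSur hp]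
    exact tsum_congr fun lam => by rw [ofReal_ratio, pow_add, mul_assoc, mul_assoc]
  refine tsum_eq_of_le_of_tendsto (l := atTop)
    (f := fun n lam => ENNReal.ofReal (ratio n lam) * weight lam) (fun n lam => ?_) (fun lam => ?_)
    (by simpa only [zeta_eq] using tendsto_subgroupZeta_int_pow hp u)
  · refine mul_le_of_le_one_left zero_le (ENNReal.ofReal_le_one.2 ?_)
    exact div_le_one_of_le₀ (mod_cast numSur_int_pow_le n _) (by positivity)
  · have := ENNReal.tendsto_ofReal (tendsto_numSur_int_pow_div (CLGroup p lam))
    simpa using ENNReal.Tendsto.mul_const (b := weight lam) this (Or.inl (by simp))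

theorem hasSum_clMeasure (hp : p.Prime) (u : ℕ) :
    HasSum (fun lam : Multiset ℕ+ => clMeasure p u (CLGroup p lam)) 1 := by
  have tsum_eq := tsum_inv_card_pow_mul_inv_numAut hp u
  have pos := clProd_pos hp.one_lt u
  have tsum_ne_top := tsum_eq.trans_ne ENNReal.ofReal_ne_top
  have := (ENNReal.hasSum_toReal tsum_ne_top).mul_right (clProd p u)
  rw [← ENNReal.tsum_toReal_eq (ENNReal.ne_top_of_tsum_ne_top tsum_ne_top), tsum_eq,
    ENNReal.toReal_ofReal (by positivity), inv_mul_cancel₀ pos.ne'] at this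
  simpa [clMeasure] using this

theorem clMeasure_div_card (hp : 1 < p) (u : ℕ) (A : Type*) [AddCommGroup A] :
    clMeasure p u A / Nat.card A = clProd p u / clProd p (u + 1) * clMeasure p (u + 1) A := by
  have := (clProd_pos hp (u + 1)).ne'
  rw [clMeasure, clMeasure, pow_succ, mul_inv]
  field_simp

end Limit

end CohenLenstra

open CohenLenstra in
theorem cl_conditioned_measure_general (p : ℕ) (hp : p.Prime) (u : ℕ)
    (A : Type*) [AddCommGroup A] [Finite A] :
    (clMeasure p u A / (Nat.card A : ℝ)) /
      (∑' lam : Multiset ℕ+, clMeasure p u (CLGroup p lam) / (Nat.card (CLGroup p lam) : ℝ))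
      = clMeasure p (u + 1) A := by
  have ratio_ne_zero : clProd p u / clProd p (u + 1) ≠ 0 :=
    div_ne_zero (clProd_pos hp.one_lt u).ne' (clProd_pos hp.one_lt (u + 1)).ne'
  simp only [clMeasure_div_card hp.one_lt]
  rw [tsum_mul_left, (hasSum_clMeasure hp (u + 1)).tsum_eq, mul_one,
    mul_div_cancel_left₀ _ ratio_ne_zero]

/-- Conditioning the pointed Cohen–Lenstra measure on the marked element being the identity
yields `μ^1`: for every finite abelian `p`-group `A`,
`(μ^0(A)/|A|) / (∑_B μ^0(B)/|B|) = μ^1(A)`. -/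
theorem cl_conditioned_measure (p : ℕ) (hp : p.Prime) (hodd : Odd p)
    (A : Type) [AddCommGroup A] (hA : ∃ n : ℕ, Nat.card A = p ^ n) :
    (clMeasure p 0 A / (Nat.card A : ℝ)) /
      (∑' lam : Multiset ℕ+, clMeasure p 0 (CLGroup p lam) / (Nat.card (CLGroup p lam) : ℝ))
      = clMeasure p 1 A := by
  obtain ⟨n, hn⟩ := hA
  have : Finite A := Nat.finite_of_card_ne_zero (hn ▸ pow_ne_zero n hp.ne_zero)
  exact cl_conditioned_measure_general p hp 0 A
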